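/- Let f=(h₀,h₁,h₂;q₀,q₁,q₂) be a minimal canonical admissible 6-tuple. Then f is a root if and only if neither of the following holds (negated q-entries and the expressions involving (h₀+h₂)/2 being taken as least nonnegative residues mod the appropriate 2lᵢ): (a) h₀=h₁, h₀<q₂<h₂, q₂≠−q₀, q₂≠(h₀+h₂)/2, and, in case q₁=0, q₂≠(h₀+h₂)/2−q₀; (b) h₀=h₁, h₀<q₀<h₂, q₀≠−q₂, q₀≠(h₀+h₂)/2, and, in case q₁=0, q₀≠(h₀+h₂)/2−q₂. -/

import Mathlib

/-!
Common setup: 6-tuples, the coloured graph Γ(f), conditions (I)–(VI),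
the maps ψ₁, ψ₂, ψ₃, σ, equivalences, traps, canonical/minimal/root tuples.
-/

namespace GMN

/-- A 6-tuple `(h₀,h₁,h₂;q₀,q₁,q₂)` of integers. -/
structure Tuple where
  h0 : ℤ
  h1 : ℤ
  h2 : ℤ
  q0 : ℤ
  q1 : ℤ
  q2 : ℤ

namespace Tuple

/-- The `h`-components indexed by `ℤ₃`. -/
def h (f : Tuple) : ZMod 3 → ℤ := fun i => if i = 0 then f.h0 else if i = 1 then f.h1 else f.h2

/-- The `q`-components indexed by `ℤ₃`. -/
def q (f : Tuple) : ZMod 3 → ℤ := fun i => if i = 0 then f.q0 else if i = 1 then f.q1 else f.q2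

/-- `2lᵢ = h_{i-1} + hᵢ`. -/
def twol (f : Tuple) (i : ZMod 3) : ℤ := f.h (i - 1) + f.h i

end Tuple

/-- Condition (I): all `hᵢ` positive. -/
def CondI (f : Tuple) : Prop := ∀ i, 0 < f.h i

/-- Condition (II): all `hᵢ` of the same parity. -/
def CondII (f : Tuple) : Prop := ∀ i j, f.h i % 2 = f.h j % 2

/-- Condition (III): `0 ≤ qᵢ < 2lᵢ`. -/
def CondIII (f : Tuple) : Prop := ∀ i, 0 ≤ f.q i ∧ f.q i < f.twol i

/-- Condition (IV): all `qᵢ` of the same parity. -/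
def CondIV (f : Tuple) : Prop := ∀ i j, f.q i % 2 = f.q j % 2

/-- Conditions (I)–(IV) together. -/
def CondsI_IV (f : Tuple) : Prop := CondI f ∧ CondII f ∧ CondIII f ∧ CondIV f

/-- Condition (V): `hᵢ + qᵢ` odd. -/
def CondV (f : Tuple) : Prop := ∀ i, (f.h i + f.q i) % 2 = 1

/-- The vertex set `V(f) = ⋃ᵢ {i} × ℤ_{2lᵢ}`, with second coordinates as least
nonnegative residues. -/
def Vtx (f : Tuple) : Set (ZMod 3 × ℤ) := {p | 0 ≤ p.2 ∧ p.2 < f.twol p.1}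

/-- `ι₀(i,j) = (i, j + (−1)^j)`, second coordinate mod `2lᵢ`. -/
def iota0 (f : Tuple) (p : ZMod 3 × ℤ) : ZMod 3 × ℤ :=
  (p.1, (if p.2 % 2 = 0 then p.2 + 1 else p.2 - 1) % f.twol p.1)

/-- `ι₁(i,j) = (i, j − (−1)^j)`, second coordinate mod `2lᵢ`. -/
def iota1 (f : Tuple) (p : ZMod 3 × ℤ) : ZMod 3 × ℤ :=
  (p.1, (if p.2 % 2 = 0 then p.2 - 1 else p.2 + 1) % f.twol p.1)

/-- `ι₂(i,j) = (i+1, −j−1)` if `0 ≤ j ≤ hᵢ−1`, and `(i−1, 2lᵢ−j−1)` if `hᵢ ≤ j ≤ 2lᵢ−1`. -/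
def iota2 (f : Tuple) (p : ZMod 3 × ℤ) : ZMod 3 × ℤ :=
  if p.2 < f.h p.1 then (p.1 + 1, (-p.2 - 1) % f.twol (p.1 + 1))
  else (p.1 - 1, (f.twol p.1 - p.2 - 1) % f.twol (p.1 - 1))

/-- `ρ(i,j) = (i, j + qᵢ)`. -/
def rho (f : Tuple) (p : ZMod 3 × ℤ) : ZMod 3 × ℤ :=
  (p.1, (p.2 + f.q p.1) % f.twol p.1)

/-- `ρ⁻¹(i,j) = (i, j − qᵢ)`. -/
def rhoInv (f : Tuple) (p : ZMod 3 × ℤ) : ZMod 3 × ℤ :=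
  (p.1, (p.2 - f.q p.1) % f.twol p.1)

/-- `ι₃ = ρ ∘ ι₂ ∘ ρ⁻¹`. -/
def iota3 (f : Tuple) : ZMod 3 × ℤ → ZMod 3 × ℤ :=
  rho f ∘ iota2 f ∘ rhoInv f

/-- The four involutions of `Γ(f)`, indexed by the colour `c ∈ {0,1,2,3}`. -/
def iota (f : Tuple) : Fin 4 → ZMod 3 × ℤ → ZMod 3 × ℤ
  | 0 => iota0 f
  | 1 => iota1 f
  | 2 => iota2 f
  | 3 => iota3 f

/-- One step along an edge of `Γ(f)` whose colour lies in `S`, within `V(f)`. -/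
def Step (f : Tuple) (S : Set (Fin 4)) (a b : ZMod 3 × ℤ) : Prop :=
  a ∈ Vtx f ∧ b ∈ Vtx f ∧ ∃ c ∈ S, b = iota f c a

/-- The orbit relation on `V(f)` of the subgroup generated by the involutions with
colours in `S` (the `S`-residue relation). -/
def OrbRel (f : Tuple) (S : Set (Fin 4)) : ZMod 3 × ℤ → ZMod 3 × ℤ → Prop :=
  Relation.EqvGen (Step f S)

/-- The subgroup generated by the colours in `S` has exactly three orbits on `V(f)`. -/
def ThreeOrbits (f : Tuple) (S : Set (Fin 4)) : Prop :=
  ∃ a b c, a ∈ Vtx f ∧ b ∈ Vtx f ∧ c ∈ Vtx f ∧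
    ¬ OrbRel f S a b ∧ ¬ OrbRel f S a c ∧ ¬ OrbRel f S b c ∧
    ∀ v ∈ Vtx f, OrbRel f S a v ∨ OrbRel f S b v ∨ OrbRel f S c v

/-- Admissibility: conditions (I)–(IV), (V), and (VI) (three `{2,3}`-residues). -/
def Admissible (f : Tuple) : Prop :=
  CondsI_IV f ∧ CondV f ∧ ThreeOrbits f {2, 3}

/-- `ψ₁(h₀,h₁,h₂;q₀,q₁,q₂) = (h₁,h₂,h₀;q₁,q₂,q₀)`. -/
def psi1 (f : Tuple) : Tuple := ⟨f.h1, f.h2, f.h0, f.q1, f.q2, f.q0⟩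

/-- `ψ₂(h₀,h₁,h₂;q₀,q₁,q₂) = (h₂,h₁,h₀;q₀,q₂,q₁)`. -/
def psi2 (f : Tuple) : Tuple := ⟨f.h2, f.h1, f.h0, f.q0, f.q2, f.q1⟩

/-- `ψ₃(h₀,h₁,h₂;q₀,q₁,q₂) = (h₀,h₁,h₂;−q₀,−q₁,−q₂)`, the `q`-entries reduced to their
least nonnegative residues mod the respective `2lᵢ`. -/
def psi3 (f : Tuple) : Tuple :=
  ⟨f.h0, f.h1, f.h2,
    (-f.q0) % (f.h2 + f.h0), (-f.q1) % (f.h0 + f.h1), (-f.q2) % (f.h1 + f.h2)⟩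

/-- The 2-symmetric transformation `σ`, with the `q′`-entries reduced to their least
nonnegative residues mod the respective `2lᵢ′ = h′_{i−1} + h′ᵢ`. -/
def sigma (f : Tuple) : Tuple :=
  if f.q0 = 0 then f
  else if f.q0 < f.h0 ∧ f.q0 < f.h2 then
    ⟨f.h0 + f.h1 - f.q0, f.q0, f.h2 + f.h1 - f.q0,
      (f.h0 + f.h1 + f.h2 - 2 * f.q0) % ((f.h2 + f.h1 - f.q0) + (f.h0 + f.h1 - f.q0)),
      (f.q0 + f.q1 + f.h1) % ((f.h0 + f.h1 - f.q0) + f.q0),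
      (f.q0 + f.q2 + f.h1) % (f.q0 + (f.h2 + f.h1 - f.q0))⟩
  else if f.h0 < f.q0 ∧ f.h2 < f.q0 then
    ⟨f.q0 + f.h1 - f.h2, f.h0 + f.h2 - f.q0, f.q0 + f.h1 - f.h0,
      f.h1 % ((f.q0 + f.h1 - f.h0) + (f.q0 + f.h1 - f.h2)),
      (f.q0 + f.q1 - f.h2) % ((f.q0 + f.h1 - f.h2) + (f.h0 + f.h2 - f.q0)),
      (f.q0 + f.q2 - f.h0) % ((f.h0 + f.h2 - f.q0) + (f.q0 + f.h1 - f.h0))⟩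
  else if f.q0 < f.h2 then
    ⟨f.h1, f.h0, f.h1 + f.h2 - f.h0,
      (f.h1 + f.h2 - f.q0) % ((f.h1 + f.h2 - f.h0) + f.h1),
      f.q1 % (f.h1 + f.h0),
      (2 * f.q0 + f.q2 + f.h1 - f.h0) % (f.h0 + (f.h1 + f.h2 - f.h0))⟩
  else
    ⟨f.h1 + f.h0 - f.h2, f.h2, f.h1,
      (f.h1 + f.h0 - f.q0) % (f.h1 + (f.h1 + f.h0 - f.h2)),
      (2 * f.q0 + f.q1 + f.h1 - f.h2) % ((f.h1 + f.h0 - f.h2) + f.h2),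
      f.q2 % (f.h2 + f.h1)⟩

/-- The complexity `ν(f) = h₀ + h₁ + h₂`. -/
def nu (f : Tuple) : ℤ := f.h0 + f.h1 + f.h2

/-- `δ(f) = ν(σ(f)) − ν(f)`. -/
def delta (f : Tuple) : ℤ := nu (sigma f) - nu f

/-- One step of the action of a generator of `H` on admissible 6-tuples. -/
def HStep (a b : Tuple) : Prop :=
  Admissible a ∧ Admissible b ∧ (b = psi1 a ∨ b = psi2 a ∨ b = psi3 a)

/-- `H`-equivalence: the orbit relation of `H = ⟨ψ₁,ψ₂,ψ₃⟩` on `ℱ`. -/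
def HEquiv : Tuple → Tuple → Prop := Relation.EqvGen HStep

/-- One step of the action of a generator of `H′` on admissible 6-tuples. -/
def H'Step (a b : Tuple) : Prop :=
  Admissible a ∧ Admissible b ∧ (b = psi2 a ∨ b = psi3 a)

/-- `H′`-equivalence: the orbit relation of `H′ = ⟨ψ₂,ψ₃⟩` on `ℱ`. -/
def H'Equiv : Tuple → Tuple → Prop := Relation.EqvGen H'Step

/-- One step of the action of a generator of `G` on admissible 6-tuples. -/
def GStep (a b : Tuple) : Prop :=
  Admissible a ∧ Admissible b ∧ (b = psi1 a ∨ b = psi2 a ∨ b = psi3 a ∨ b = sigma a)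

/-- `G`-equivalence: the orbit relation of `G = ⟨ψ₁,ψ₂,ψ₃,σ⟩` on `ℱ`. -/
def GEquiv : Tuple → Tuple → Prop := Relation.EqvGen GStep

/-- Membership in the set `{0, r+1, r+2, …, s−1}`. -/
def inT (r s x : ℤ) : Prop := x = 0 ∨ (r < x ∧ x < s)

/-- A trap of type `(r,s)`: `H`-equivalent to an admissible `(r,r,s;q₀,0,q₂)` with
`q₀+k(q₀+q₂), q₂+k(q₀+q₂) ∈ {0,r+1,…,s−1} (mod r+s)` for all `k ≥ 0`. -/
def IsTrapOfType (r s : ℤ) (f : Tuple) : Prop :=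
  ∃ g : Tuple, Admissible g ∧ HEquiv f g ∧
    g.h0 = r ∧ g.h1 = r ∧ g.h2 = s ∧ g.q1 = 0 ∧
    ∀ k : ℕ, inT r s ((g.q0 + (k : ℤ) * (g.q0 + g.q2)) % (r + s)) ∧
             inT r s ((g.q2 + (k : ℤ) * (g.q0 + g.q2)) % (r + s))

/-- A trap: a trap of some type `(r,s)` with `0 < r ≤ s`. -/
def IsTrap (f : Tuple) : Prop := ∃ r s : ℤ, 0 < r ∧ r ≤ s ∧ IsTrapOfType r s f

/-- The canonical representative conditions (a)–(i) (together with admissibility). -/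
def Canonical (f : Tuple) : Prop :=
  Admissible f ∧
  (f.h0 ≤ f.h1 ∧ f.h1 ≤ f.h2) ∧
  (2 * f.q0 ≤ f.h2 + f.h0) ∧
  ((f.q0 = 0 ∨ 2 * f.q0 = f.h2 + f.h0) → 2 * f.q1 ≤ f.h0 + f.h1) ∧
  ((f.q0 = 0 ∨ 2 * f.q0 = f.h2 + f.h0) → (f.q1 = 0 ∨ 2 * f.q1 = f.h0 + f.h1) →
    2 * f.q2 ≤ f.h1 + f.h2) ∧
  (f.h0 = f.h1 → f.q0 ≤ f.q2 ∧ f.q2 ≤ (-f.q0) % (f.h2 + f.h0)) ∧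
  (f.h0 = f.h1 → (f.q2 = f.q0 ∨ f.q2 = (-f.q0) % (f.h2 + f.h0)) → f.q1 ≤ f.h1) ∧
  (f.h1 = f.h2 → f.q0 ≤ f.q1 ∧ f.q1 ≤ (-f.q0) % (f.h2 + f.h0)) ∧
  (f.h1 = f.h2 → (f.q1 = f.q0 ∨ f.q1 = (-f.q0) % (f.h2 + f.h0)) → f.q2 ≤ f.h2) ∧
  (f.h0 = f.h1 ∧ f.h1 = f.h2 → f.q1 ≤ f.q2)

/-- A canonical 6-tuple is minimal if its complexity is minimal in its `G`-orbit. -/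
def Minimal (f : Tuple) : Prop :=
  Canonical f ∧ ∀ g, GEquiv f g → nu f ≤ nu g

/-- A canonical 6-tuple is a root if every `G`-equivalent but not `H`-equivalent
6-tuple has strictly larger complexity. -/
def Root (f : Tuple) : Prop :=
  Canonical f ∧ ∀ g, GEquiv f g → ¬ HEquiv f g → nu f < nu g

/-- A colour-preserving isomorphism between `Γ(f)` and `Γ(f′)`. -/
def CPIso (f f' : Tuple) : Prop :=
  ∃ φ : ZMod 3 × ℤ → ZMod 3 × ℤ, Set.BijOn φ (Vtx f) (Vtx f') ∧
    ∀ c : Fin 4, ∀ v ∈ Vtx f, φ (iota f c v) = iota f' c (φ v)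

/-- The set of admissible 6-tuples, as a type. -/
abbrev AdmTuple := {f : Tuple // Admissible f}


/-- `Good f` collects conditions (I)–(V). -/
def Good (f : Tuple) : Prop := CondsI_IV f ∧ CondV f

theorem forall_zmod_three {P : ZMod 3 → Prop} : (∀ i, P i) ↔ P 0 ∧ P 1 ∧ P 2 :=
  ⟨fun h => ⟨h 0, h 1, h 2⟩, fun ⟨h0, h1, h2⟩ i => by fin_cases i <;> assumption⟩

section Components

variable (f : Tuple)

@[simp] theorem h_zero : f.h 0 = f.h0 := rfl
@[simp] theorem h_one : f.h 1 = f.h1 := rfl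
@[simp] theorem h_two : f.h 2 = f.h2 := rfl
@[simp] theorem q_zero : f.q 0 = f.q0 := rfl
@[simp] theorem q_one : f.q 1 = f.q1 := rfl
@[simp] theorem q_two : f.q 2 = f.q2 := rfl
@[simp] theorem twol_zero : f.twol 0 = f.h2 + f.h0 := rfl
@[simp] theorem twol_one : f.twol 1 = f.h0 + f.h1 := rfl
@[simp] theorem twol_two : f.twol 2 = f.h1 + f.h2 := rfl

end Components

theorem good_iff (f : Tuple) : Good f ↔
    (0 < f.h0 ∧ 0 < f.h1 ∧ 0 < f.h2) ∧ (f.h0 % 2 = f.h1 % 2 ∧ f.h1 % 2 = f.h2 % 2) ∧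
    (0 ≤ f.q0 ∧ f.q0 < f.h2 + f.h0) ∧ (0 ≤ f.q1 ∧ f.q1 < f.h0 + f.h1) ∧
    (0 ≤ f.q2 ∧ f.q2 < f.h1 + f.h2) ∧
    (f.h0 + f.q0) % 2 = 1 ∧ (f.h1 + f.q1) % 2 = 1 ∧ (f.h2 + f.q2) % 2 = 1 := by
  simp only [Good, CondsI_IV, CondI, CondII, CondIII, CondIV, CondV, forall_zmod_three, h_zero,
    h_one, h_two, q_zero, q_one, q_two, twol_zero, twol_one, twol_two]
  have par : ∀ {a b c d : ℤ}, a % 2 = b % 2 → (a + c) % 2 = 1 → (b + d) % 2 = 1 →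
      c % 2 = d % 2 := fun {a b c d} h h1 h2 => by
    rcases Int.emod_two_eq c with h' | h' <;> rcases Int.emod_two_eq d with h'' | h'' <;> omega
  constructor
  · intro h
    refine ⟨h.1.1, ?_, ?_⟩ <;> omega
  · rintro ⟨hp, hh, h0, h1, h2, p0, p1, p2⟩
    have e0 := par hh.1 p0 p1
    have e1 := par hh.2 p1 p2
    exact ⟨⟨hp, ⟨⟨trivial, hh.1, hh.1.trans hh.2⟩, ⟨hh.1.symm, trivial, hh.2⟩,
      (hh.1.trans hh.2).symm, hh.2.symm, trivial⟩, ⟨h0, h1, h2⟩,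
      ⟨trivial, e0, e0.trans e1⟩, ⟨e0.symm, trivial, e1⟩, (e0.trans e1).symm, e1.symm, trivial⟩,
      p0, p1, p2⟩

theorem Admissible.good {f : Tuple} (hf : Admissible f) : Good f := ⟨hf.1, hf.2.1⟩

/-! ### Points with integer representatives and the `{2,3}`-orbits -/

/-- The vertex of `Γ(f)` on the `i`-th circle with position `x` modulo `2lᵢ`. -/
def pt (f : Tuple) (i : ZMod 3) (x : ℤ) : ZMod 3 × ℤ := (i, x % f.twol i)

theorem pt_congr {f g : Tuple} {i : ZMod 3} {x y : ℤ} (k : ℤ) (ht : f.twol i = g.twol i)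
    (h : x = y + f.twol i * k) : pt f i x = pt g i y := by
  simp [pt, h, ← ht]

theorem twol_pos {f : Tuple} (hf : Good f) (i : ZMod 3) : 0 < f.twol i :=
  add_pos (hf.1.1 _) (hf.1.1 _)

theorem pt_mem {f : Tuple} (hf : Good f) (i : ZMod 3) (x : ℤ) : pt f i x ∈ Vtx f :=
  ⟨Int.emod_nonneg _ (twol_pos hf i).ne', Int.emod_lt_of_pos _ (twol_pos hf i)⟩

theorem pt_of_mem {f : Tuple} {a : ZMod 3 × ℤ} (ha : a ∈ Vtx f) : pt f a.1 a.2 = a :=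
  Prod.ext rfl (Int.emod_eq_of_lt ha.1 ha.2)

theorem iota2_pt {f : Tuple} (hf : Good f) {i : ZMod 3} {x : ℤ} (h0 : 0 ≤ x) (hx : x < f.h i) :
    iota2 f (pt f i x) = pt f (i + 1) (-1 - x) := by
  have hlt : x < f.twol i := lt_trans hx (lt_add_of_pos_left _ (hf.1.1 _))
  have h : x % f.twol i = x := Int.emod_eq_of_lt h0 hlt
  simp only [iota2, pt, h, hx, if_true]
  congr 2
  ring

theorem rhoInv_pt (f : Tuple) (i : ZMod 3) (x : ℤ) : rhoInv f (pt f i x) = pt f i (x - f.q i) := by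
  simp [rhoInv, pt]

theorem rho_pt (f : Tuple) (i : ZMod 3) (x : ℤ) : rho f (pt f i x) = pt f i (x + f.q i) := by
  simp [rho, pt]

theorem iota3_pt {f : Tuple} (hf : Good f) {i : ZMod 3} {x : ℤ} (h0 : 0 ≤ x) (hx : x < f.h i) :
    iota3 f (pt f i (x + f.q i)) = pt f (i + 1) (-1 - x + f.q (i + 1)) := by
  simp [iota3, rhoInv_pt, rho_pt, iota2_pt hf h0 hx]

theorem orbRel_two {f : Tuple} (hf : Good f) (i : ZMod 3) (x : ℤ) (h0 : 0 ≤ x) (hx : x < f.h i) :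
    OrbRel f {2, 3} (pt f i x) (pt f (i + 1) (-1 - x)) :=
  .rel _ _ ⟨pt_mem hf _ _, pt_mem hf _ _, 2, by simp, (iota2_pt hf h0 hx).symm⟩

theorem orbRel_three {f : Tuple} (hf : Good f) (i : ZMod 3) (x : ℤ) (h0 : 0 ≤ x)
    (hx : x < f.h i) :
    OrbRel f {2, 3} (pt f i (x + f.q i)) (pt f (i + 1) (-1 - x + f.q (i + 1))) :=
  .rel _ _ ⟨pt_mem hf _ _, pt_mem hf _ _, 3, by simp, (iota3_pt hf h0 hx).symm⟩

/-- Every vertex is an endpoint of one of the arcs `x ↦ -1 - x` joining circle `i` to `i + 1`. -/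
theorem exists_arc {f : Tuple} {a : ZMod 3 × ℤ} (ha : a ∈ Vtx f) :
    ∃ i x, 0 ≤ x ∧ x < f.h i ∧
      ((a = pt f i x ∧ iota2 f a = pt f (i + 1) (-1 - x)) ∨
       (a = pt f (i + 1) (-1 - x) ∧ iota2 f a = pt f i x)) := by
  obtain ⟨i, j⟩ := a
  obtain ⟨h0, h1⟩ := ha
  simp only at h0 h1
  by_cases hj : j < f.h i
  · refine ⟨i, j, h0, hj, Or.inl ⟨(pt_of_mem (a := (i, j)) ⟨h0, h1⟩).symm, ?_⟩⟩
    simp only [iota2, pt, hj, if_true]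
    congr 2
    ring
  · have e : i - 1 + 1 = i := by ring
    refine ⟨i - 1, f.twol i - j - 1, by omega, ?_, Or.inr ⟨?_, ?_⟩⟩
    · have : f.twol i = f.h (i - 1) + f.h i := rfl
      omega
    · rw [e, ← pt_of_mem (a := (i, j)) ⟨h0, h1⟩]
      exact pt_congr 1 rfl (by simp only; ring)
    · simp only [iota2, pt, hj, if_false]

/-- The `{2,3}`-orbit relation is the smallest equivalence relation containing all arcs. -/
theorem orbRel_induction {f : Tuple} {R : ZMod 3 × ℤ → ZMod 3 × ℤ → Prop} (hR : Equivalence R)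
    (h2 : ∀ i x, 0 ≤ x → x < f.h i → R (pt f i x) (pt f (i + 1) (-1 - x)))
    (h3 : ∀ i x, 0 ≤ x → x < f.h i →
      R (pt f i (x + f.q i)) (pt f (i + 1) (-1 - x + f.q (i + 1))))
    (hf : Good f) {a b : ZMod 3 × ℤ} (h : OrbRel f {2, 3} a b) : R a b := by
  induction h with
  | refl x => exact hR.refl x
  | symm x y _ ih => exact hR.symm ih
  | trans x y z _ _ ih1 ih2 => exact hR.trans ih1 ih2
  | rel x y hxy =>
    obtain ⟨hx, -, c, hc, rfl⟩ := hxy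
    rcases hc with rfl | rfl
    · change R x (iota2 f x)
      obtain ⟨i, t, t0, t1, ⟨h, h'⟩ | ⟨h, h'⟩⟩ := exists_arc hx
      · rw [h', h]; exact h2 i t t0 t1
      · rw [h', h]; exact hR.symm (h2 i t t0 t1)
    · change R x (rho f (iota2 f (rhoInv f x)))
      have hx' : x = rho f (rhoInv f x) := by
        rw [← pt_of_mem hx, rhoInv_pt, rho_pt, sub_add_cancel]
      obtain ⟨i, t, t0, t1, ⟨h, h'⟩ | ⟨h, h'⟩⟩ :=
        exists_arc (f := f) (a := rhoInv f x) (pt_mem hf _ _)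
      · rw [h', rho_pt]; nth_rw 1 [hx']; rw [h, rho_pt]; exact h3 i t t0 t1
      · rw [h', rho_pt]; nth_rw 1 [hx']; rw [h, rho_pt]; exact hR.symm (h3 i t t0 t1)

theorem orbRel_equivalence (f : Tuple) (S : Set (Fin 4)) : Equivalence (OrbRel f S) :=
  Relation.EqvGen.is_equivalence _

theorem orbRel_refl (f : Tuple) (a : ZMod 3 × ℤ) : OrbRel f {2, 3} a a := .refl a

theorem OrbRel.symm {f : Tuple} {a b : ZMod 3 × ℤ} (h : OrbRel f {2, 3} a b) :
    OrbRel f {2, 3} b a := Relation.EqvGen.symm _ _ h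

theorem OrbRel.trans {f : Tuple} {a b c : ZMod 3 × ℤ} (h : OrbRel f {2, 3} a b)
    (h' : OrbRel f {2, 3} b c) : OrbRel f {2, 3} a c := Relation.EqvGen.trans _ _ _ h h'

/-- `Φ` maps `{2,3}`-orbits of `Γ(f)` into `{2,3}`-orbits of `Γ(g)`. -/
def MapsOrbits (f g : Tuple) (Φ : ZMod 3 × ℤ → ZMod 3 × ℤ) : Prop :=
  (∀ a ∈ Vtx f, Φ a ∈ Vtx g) ∧
    ∀ a b, OrbRel f {2, 3} a b → OrbRel g {2, 3} (Φ a) (Φ b)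

theorem mapsOrbits_of_arcs {f g : Tuple} {Φ : ZMod 3 × ℤ → ZMod 3 × ℤ} (hf : Good f)
    (hV : ∀ a ∈ Vtx f, Φ a ∈ Vtx g)
    (h2 : ∀ i x, 0 ≤ x → x < f.h i →
      OrbRel g {2, 3} (Φ (pt f i x)) (Φ (pt f (i + 1) (-1 - x))))
    (h3 : ∀ i x, 0 ≤ x → x < f.h i →
      OrbRel g {2, 3} (Φ (pt f i (x + f.q i))) (Φ (pt f (i + 1) (-1 - x + f.q (i + 1))))) :
    MapsOrbits f g Φ :=
  ⟨hV, fun _ _ h => orbRel_induction (R := fun a b => OrbRel g {2, 3} (Φ a) (Φ b))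
    ((orbRel_equivalence g {2, 3}).comap Φ) h2 h3 hf h⟩

theorem ThreeOrbits.transfer {f g : Tuple} {Φ Ψ : ZMod 3 × ℤ → ZMod 3 × ℤ}
    (h : ThreeOrbits f {2, 3}) (hΦ : MapsOrbits f g Φ) (hΨ : MapsOrbits g f Ψ)
    (hΨΦ : ∀ a ∈ Vtx f, OrbRel f {2, 3} (Ψ (Φ a)) a)
    (hΦΨ : ∀ a ∈ Vtx g, OrbRel g {2, 3} (Φ (Ψ a)) a) : ThreeOrbits g {2, 3} := by
  obtain ⟨a, b, c, ha, hb, hc, hab, hac, hbc, hall⟩ := h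
  have key : ∀ x ∈ Vtx f, ∀ y ∈ Vtx f, ¬ OrbRel f {2, 3} x y →
      ¬ OrbRel g {2, 3} (Φ x) (Φ y) := fun x hx y hy hxy hxy' =>
    hxy (((hΨΦ x hx).symm.trans (hΨ.2 _ _ hxy')).trans (hΨΦ y hy))
  have key' : ∀ v ∈ Vtx g, ∀ x, OrbRel f {2, 3} x (Ψ v) → OrbRel g {2, 3} (Φ x) v :=
    fun v hv x hx => (hΦ.2 _ _ hx).trans (hΦΨ v hv)
  refine ⟨Φ a, Φ b, Φ c, hΦ.1 a ha, hΦ.1 b hb, hΦ.1 c hc, key a ha b hb hab, key a ha c hc hac,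
    key b hb c hc hbc, fun v hv => ?_⟩
  exact (hall (Ψ v) (hΨ.1 v hv)).imp (key' v hv a) (Or.imp (key' v hv b) (key' v hv c))

/-! ### The maps `ψ₁`, `ψ₂`, `ψ₃` preserve admissibility -/

theorem neg_emod_cases {x m : ℤ} (h0 : 0 ≤ x) (h1 : x < m) :
    (x = 0 ∧ (-x) % m = 0) ∨ (0 < x ∧ (-x) % m = m - x) := by
  rcases h0.eq_or_lt with rfl | h
  · simp
  · right
    refine ⟨h, ?_⟩
    rw [← Int.add_emod_right, Int.emod_eq_of_lt] <;> omega

theorem Good.psi1 {f : Tuple} (hf : Good f) : Good (psi1 f) := by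
  rw [good_iff] at *
  simp only [GMN.psi1]
  omega

theorem Good.psi2 {f : Tuple} (hf : Good f) : Good (psi2 f) := by
  rw [good_iff] at *
  simp only [GMN.psi2]
  omega

theorem Good.psi3 {f : Tuple} (hf : Good f) : Good (psi3 f) := by
  rw [good_iff] at *
  obtain ⟨hp, hh, h0, h1, h2, hpar⟩ := hf
  simp only [GMN.psi3]
  have e0 := neg_emod_cases h0.1 h0.2
  have e1 := neg_emod_cases h1.1 h1.2
  have e2 := neg_emod_cases h2.1 h2.2
  refine ⟨hp, hh, ?_, ?_, ?_, ?_, ?_, ?_⟩ <;> omega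

theorem psi3_psi3 {f : Tuple} (hf : Good f) : psi3 (psi3 f) = f := by
  rw [good_iff] at hf
  obtain ⟨hp, hh, h0, h1, h2, hpar⟩ := hf
  have key : ∀ {x m : ℤ}, 0 ≤ x → x < m → -((-x) % m) % m = x := by
    intro x m hx hm
    rw [Int.emod_def (-x) m, show -(-x - m * (-x / m)) = x + m * (-x / m) by ring,
      Int.add_mul_emod_self_left, Int.emod_eq_of_lt hx hm]
  cases f
  simp only [psi3, Tuple.mk.injEq, true_and]
  exact ⟨key h0.1 h0.2, key h1.1 h1.2, key h2.1 h2.2⟩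

theorem psi2_psi2 (f : Tuple) : psi2 (psi2 f) = f := rfl

theorem psi1_psi1_psi1 (f : Tuple) : psi1 (psi1 (psi1 f)) = f := rfl

/-- Renumbering of the circles. -/
def rotate (k : ZMod 3) (a : ZMod 3 × ℤ) : ZMod 3 × ℤ := (a.1 + k, a.2)

theorem mapsOrbits_rotate {f g : Tuple} (k : ZMod 3) (hf : Good f) (hg : Good g)
    (hh : ∀ i, g.h (i + k) = f.h i) (hq : ∀ i, g.q (i + k) = f.q i) :
    MapsOrbits f g (rotate k) := by
  have ht : ∀ i, g.twol (i + k) = f.twol i := fun i => by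
    rw [Tuple.twol, Tuple.twol, hh, ← hh (i - 1), sub_add_eq_add_sub]
  have hΦ : ∀ i x, rotate k (pt f i x) = pt g (i + k) x := fun i x => by
    simp only [rotate, pt, ht]
  have e : ∀ i : ZMod 3, i + 1 + k = i + k + 1 := fun i => by ring
  refine mapsOrbits_of_arcs hf (fun a ha => ?_) (fun i x h0 h1 => ?_) (fun i x h0 h1 => ?_)
  · rw [← pt_of_mem ha, hΦ]; exact pt_mem hg _ _
  · rw [hΦ, hΦ, e]
    exact orbRel_two hg _ _ h0 (by rwa [hh])
  · rw [hΦ, hΦ, ← hq i, ← hq (i + 1), e]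
    exact orbRel_three hg _ _ h0 (by rwa [hh])

theorem Admissible.psi1 {f : Tuple} (hf : Admissible f) : Admissible (psi1 f) := by
  have hg := hf.good.psi1
  have hrot : ∀ k l : ZMod 3, k + l = 0 → ∀ a, rotate k (rotate l a) = a := fun k l h a => by
    simp [rotate, add_assoc, add_comm l k, h]
  refine ⟨hg.1, hg.2, hf.2.2.transfer
    (mapsOrbits_rotate 2 hf.good hg (forall_zmod_three.2 ⟨rfl, rfl, rfl⟩)
      (forall_zmod_three.2 ⟨rfl, rfl, rfl⟩))
    (mapsOrbits_rotate 1 hg hf.good (forall_zmod_three.2 ⟨rfl, rfl, rfl⟩)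
      (forall_zmod_three.2 ⟨rfl, rfl, rfl⟩)) (fun a _ => ?_) (fun a _ => ?_)⟩
  · rw [hrot _ _ (by decide)]; exact orbRel_refl _ a
  · rw [hrot _ _ (by decide)]; exact orbRel_refl _ a

/-- The vertex map `(i, j) ↦ (-i, qᵢ - 1 - j)` underlying `ψ₂`. -/
def mirror (f : Tuple) (a : ZMod 3 × ℤ) : ZMod 3 × ℤ :=
  (-a.1, (f.q a.1 - 1 - a.2) % f.twol a.1)

theorem mirror_pt {f g : Tuple} (ht : ∀ i, g.twol (-i) = f.twol i) (i : ZMod 3) (x : ℤ) :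
    mirror f (pt f i x) = pt g (-i) (f.q i - 1 - x) := by
  simp [mirror, pt, ht]

theorem mapsOrbits_mirror {f g : Tuple} (hf : Good f) (hg : Good g)
    (hh : ∀ i, g.h (-i - 1) = f.h i) (hq : ∀ i, g.q (-i) = f.q i)
    (ht : ∀ i, g.twol (-i) = f.twol i) : MapsOrbits f g (mirror f) := by
  have e : ∀ i : ZMod 3, -(i + 1) = -i - 1 := fun i => by ring
  refine mapsOrbits_of_arcs hf (fun a ha => ?_) (fun i x h0 h1 => ?_) (fun i x h0 h1 => ?_)
  · rw [← pt_of_mem ha, mirror_pt ht]; exact pt_mem hg _ _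
  · rw [mirror_pt ht, mirror_pt ht, e]
    have := orbRel_three hg (-i - 1) x h0 (by rwa [hh])
    rw [sub_add_cancel, hq, ← e, hq, e] at this
    convert this.symm using 2 <;> omega
  · rw [mirror_pt ht, mirror_pt ht, e]
    have := orbRel_two hg (-i - 1) x h0 (by rwa [hh])
    rw [sub_add_cancel] at this
    convert this.symm using 2 <;> omega

theorem Admissible.psi2 {f : Tuple} (hf : Admissible f) : Admissible (psi2 f) := by
  have hg := hf.good.psi2
  have ht : ∀ i, (GMN.psi2 f).twol (-i) = f.twol i := by
    rw [forall_zmod_three]; exact ⟨add_comm _ _, add_comm _ _, add_comm _ _⟩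
  have hh : ∀ i, (GMN.psi2 f).h (-i - 1) = f.h i := by
    rw [forall_zmod_three]; exact ⟨rfl, rfl, rfl⟩
  have hq : ∀ i, (GMN.psi2 f).q (-i) = f.q i := by
    rw [forall_zmod_three]; exact ⟨rfl, rfl, rfl⟩
  generalize GMN.psi2 f = g at *
  have ht' : ∀ i, f.twol (-i) = g.twol i := fun i => by rw [← ht, neg_neg]
  have hh' : ∀ i, f.h (-i - 1) = g.h i := fun i => by rw [← hh]; congr 1; ring
  have hq' : ∀ i, f.q (-i) = g.q i := fun i => by rw [← hq, neg_neg]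
  refine ⟨hg.1, hg.2, hf.2.2.transfer (mapsOrbits_mirror hf.good hg hh hq ht)
    (mapsOrbits_mirror hg hf.good hh' hq' ht') (fun a ha => ?_) (fun a ha => ?_)⟩
  · rw [← pt_of_mem ha, mirror_pt ht, mirror_pt ht', neg_neg, hq]
    convert orbRel_refl _ _ using 2; ring
  · rw [← pt_of_mem ha, mirror_pt ht', mirror_pt ht, neg_neg, hq']
    convert orbRel_refl _ _ using 2; ring

theorem mapsOrbits_rhoInv {f g : Tuple} (hf : Good f) (hg : Good g)
    (hh : ∀ i, g.h i = f.h i) (ht : ∀ i, f.twol i = g.twol i)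
    (hq : ∀ i, ∃ k, g.q i = -f.q i + f.twol i * k) : MapsOrbits f g (rhoInv f) := by
  have e : ∀ i x, pt f i x = pt g i x := fun i x => pt_congr 0 (ht i) (by ring)
  choose k hk using hq
  refine mapsOrbits_of_arcs hf (fun a ha => ?_) (fun i x h0 h1 => ?_) (fun i x h0 h1 => ?_)
  · rw [← pt_of_mem ha, rhoInv_pt, e]; exact pt_mem hg _ _
  · rw [rhoInv_pt, rhoInv_pt, pt_congr (g := g) (y := x + g.q i) (-k i) (ht i) (by rw [hk]; ring),
      pt_congr (g := g) (y := -1 - x + g.q (i + 1)) (-k (i + 1)) (ht _) (by rw [hk]; ring)]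
    exact orbRel_three hg _ _ h0 (by rwa [hh])
  · rw [rhoInv_pt, rhoInv_pt, add_sub_cancel_right, add_sub_cancel_right, e, e]
    exact orbRel_two hg _ _ h0 (by rwa [hh])

theorem Admissible.psi3 {f : Tuple} (hf : Admissible f) : Admissible (psi3 f) := by
  have hg := hf.good.psi3
  have hh : ∀ i, (GMN.psi3 f).h i = f.h i := by
    rw [forall_zmod_three]; exact ⟨rfl, rfl, rfl⟩
  have ht : ∀ i, f.twol i = (GMN.psi3 f).twol i := by
    rw [forall_zmod_three]; exact ⟨rfl, rfl, rfl⟩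
  have hq : ∀ i, ∃ k, (GMN.psi3 f).q i = -f.q i + f.twol i * k := by
    have key : ∀ x m : ℤ, ∃ k, x % m = x + m * k := fun x m =>
      ⟨-(x / m), by rw [Int.emod_def]; ring⟩
    rw [forall_zmod_three]; exact ⟨key _ _, key _ _, key _ _⟩
  generalize GMN.psi3 f = g at *
  have hq' : ∀ i, ∃ k, f.q i = -g.q i + g.twol i * k := fun i => by
    obtain ⟨k, hk⟩ := hq i
    exact ⟨k, by rw [hk, ht]; ring⟩
  have e : ∀ i x, pt f i x = pt g i x := fun i x => pt_congr 0 (ht i) (by ring)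
  refine ⟨hg.1, hg.2, hf.2.2.transfer (mapsOrbits_rhoInv hf.good hg hh ht hq)
    (mapsOrbits_rhoInv hg hf.good (fun i => (hh i).symm) (fun i => (ht i).symm) hq')
    (fun a ha => ?_) (fun a ha => ?_)⟩
  · obtain ⟨k, hk⟩ := hq a.1
    rw [← pt_of_mem ha, rhoInv_pt, e, rhoInv_pt, ← e, hk,
      pt_congr (g := f) (y := a.2) (-k) rfl (by ring)]
    exact orbRel_refl _ _
  · obtain ⟨k, hk⟩ := hq' a.1
    rw [← pt_of_mem ha, rhoInv_pt, ← e, rhoInv_pt, e, hk,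
      pt_congr (g := g) (y := a.2) (-k) rfl (by ring)]
    exact orbRel_refl _ _

/-! ### The level moves of `σ` preserve admissibility -/

theorem orbRel_two_of_eq {f : Tuple} (hf : Good f) {i j : ZMod 3} {x y : ℤ} (t k l : ℤ)
    (hj : i + 1 = j) (h0 : 0 ≤ t) (ht : t < f.h i) (hx : x = t + f.twol i * k)
    (hy : y = -1 - t + f.twol j * l) : OrbRel f {2, 3} (pt f i x) (pt f j y) := by
  subst hj
  rw [pt_congr k rfl hx, pt_congr l rfl hy]
  exact orbRel_two hf i t h0 ht

theorem orbRel_three_of_eq {f : Tuple} (hf : Good f) {i j : ZMod 3} {x y : ℤ} (t k l : ℤ)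
    (hj : i + 1 = j) (h0 : 0 ≤ t) (ht : t < f.h i) (hx : x = t + f.q i + f.twol i * k)
    (hy : y = -1 - t + f.q j + f.twol j * l) : OrbRel f {2, 3} (pt f i x) (pt f j y) := by
  subst hj
  rw [pt_congr k rfl hx, pt_congr l rfl hy]
  exact orbRel_three hf i t h0 ht

/-- `LevelMove f g`: `f = (r,r,s;q₀,q₁,q₂)` and `g = (r,r,s;-q₀,q₁,2q₀+q₂)` with `r < q₀ < s`. -/
structure LevelMove (f g : Tuple) : Prop where
  f_h1 : f.h1 = f.h0
  g_h0 : g.h0 = f.h0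
  g_h1 : g.h1 = f.h0
  g_h2 : g.h2 = f.h2
  lt_q0 : f.h0 < f.q0
  q0_lt : f.q0 < f.h2
  g_q0 : g.q0 = f.h0 + f.h2 - f.q0
  g_q1 : g.q1 = f.q1
  g_q2 : ∃ k, g.q2 = f.q2 + 2 * f.q0 + (f.h0 + f.h2) * k

theorem LevelMove.symm {f g : Tuple} (h : LevelMove f g) : LevelMove g f := by
  obtain ⟨h1, h2, h3, h4, h5, h6, h7, h8, k, hk⟩ := h
  refine ⟨by omega, by omega, by omega, by omega, by omega, by omega, by omega, by omega,
    -2 - k, ?_⟩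
  rw [hk, h7, h2, h4]
  ring

/-- The vertex map realising a level move: circles 1 and 2 are relabelled, and circle 0 is
collapsed along its `ι₂`-arcs onto circles 1 and 2. -/
def slide (f : Tuple) (a : ZMod 3 × ℤ) : ZMod 3 × ℤ :=
  if a.1 = 0 then
    if a.2 < f.h0 then pt f 1 (f.q1 + a.2) else pt f 2 (f.q0 - 1 - a.2)
  else if a.1 = 1 then pt f 1 (f.q1 - 1 - a.2)
  else pt f 2 (f.q0 + a.2)

section Slide

variable {f g : Tuple}

theorem slide_pt_zero_of_lt (h : LevelMove f g)
    {x : ℤ} (y k : ℤ) (hx : x = y + (f.h2 + f.h0) * k) (h0 : 0 ≤ y)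
    (h1 : y < f.h0) : slide f (pt f 0 x) = pt g 1 (f.q1 + y) := by
  have e : x % (f.h2 + f.h0) = y := by
    have := h.lt_q0
    have := h.q0_lt
    rw [hx, Int.add_mul_emod_self_left, Int.emod_eq_of_lt h0 (by omega)]
  simp only [slide, pt, twol_zero, e, h1, if_true, twol_one, h.g_h0, h.g_h1, h.f_h1]

theorem slide_pt_zero_of_le (h : LevelMove f g)
    {x : ℤ} (y k : ℤ) (hx : x = y + (f.h2 + f.h0) * k) (hp : 0 < f.h0)
    (h0 : f.h0 ≤ y) (h1 : y < f.h2 + f.h0) : slide f (pt f 0 x) = pt g 2 (f.q0 - 1 - y) := by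
  have e : x % (f.h2 + f.h0) = y := by
    rw [hx, Int.add_mul_emod_self_left, Int.emod_eq_of_lt (by omega) h1]
  simp only [slide, pt, twol_zero, e, h0.not_gt, if_true, if_false, twol_two, h.g_h1, h.g_h2,
    h.f_h1]

theorem slide_pt_one (h : LevelMove f g) (x : ℤ) : slide f (pt f 1 x) = pt g 1 (f.q1 - 1 - x) := by
  have : (1 : ZMod 3) ≠ 0 := by decide
  simp [slide, pt, this, h.g_h0, h.g_h1, h.f_h1]

theorem slide_pt_two (h : LevelMove f g) (x : ℤ) : slide f (pt f 2 x) = pt g 2 (f.q0 + x) := by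
  have : (2 : ZMod 3) ≠ 0 := by decide
  have : (2 : ZMod 3) ≠ 1 := by decide
  simp [slide, pt, *, h.g_h1, h.g_h2, h.f_h1]

theorem mapsOrbits_slide (h : LevelMove f g)
    (hf : Good f) (hg : Good g) : MapsOrbits f g (slide f) := by
  have e1 : (0 : ZMod 3) + 1 = 1 := by decide
  have e2 : (1 : ZMod 3) + 1 = 2 := by decide
  have e3 : (2 : ZMod 3) + 1 = 0 := by decide
  have hp := ((good_iff f).1 hf).1
  obtain ⟨f1, g0, g1, g2, lo, hi, gq0, gq1, m, gq2⟩ := id h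
  have tw0 : g.twol 0 = f.h2 + f.h0 := by rw [twol_zero, g0, g2]
  have tw1 : g.twol 1 = 2 * f.h0 := by rw [twol_one, g0, g1]; ring
  have tw2 : g.twol 2 = f.h2 + f.h0 := by rw [twol_two, g1, g2]; ring
  refine mapsOrbits_of_arcs hf (fun a ha => ?_) ?_ ?_
  · have key : ∀ i x, slide f (pt f i x) ∈ Vtx g := by
      refine forall_zmod_three.2 ⟨fun x => ?_, fun x => ?_, fun x => ?_⟩
      · have hm := Int.emod_add_mul_ediv x (f.h2 + f.h0)
        have := Int.emod_nonneg x (b := f.h2 + f.h0) (by omega)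
        have := Int.emod_lt_of_pos x (b := f.h2 + f.h0) (by omega)
        by_cases hc : x % (f.h2 + f.h0) < f.h0
        · rw [slide_pt_zero_of_lt h _ _ hm.symm (by omega) hc]; exact pt_mem hg _ _
        · rw [slide_pt_zero_of_le h _ _ hm.symm hp.1 (by omega) (by omega)]; exact pt_mem hg _ _
      · rw [slide_pt_one h]; exact pt_mem hg _ _
      · rw [slide_pt_two h]; exact pt_mem hg _ _
    rw [← pt_of_mem ha]; exact key _ _
  · refine forall_zmod_three.2 ⟨fun x x0 x1 => ?_, fun x x0 x1 => ?_, fun x x0 x1 => ?_⟩ <;>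
      simp only [h_zero, h_one, h_two] at x1
    · rw [e1, slide_pt_zero_of_lt h x 0 (by ring) x0 x1, slide_pt_one h]
      convert orbRel_refl _ _ using 2; ring
    · rw [e2, slide_pt_one h, slide_pt_two h]
      refine OrbRel.trans
        (orbRel_three_of_eq (i := 0) (j := 1) (y := f.q1 - 1 - x) (x := x + g.q0) hg
          x 0 0 e1 x0 (by rw [h_zero]; omega) (by rw [q_zero]; ring) (by rw [q_one, gq1]; ring)).symm
        (orbRel_two_of_eq (i := 2) (j := 0) hg (f.q0 - 1 - x) 0 1 e3 (by omega)
          (by rw [h_two]; omega) (by ring) (by rw [gq0, tw0]; ring)).symm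
    · rw [e3, slide_pt_two h, slide_pt_zero_of_le h (f.h2 + f.h0 - 1 - x) (-1) (by ring) hp.1
        (by omega) (by omega)]
      rw [pt_congr (g := g) (x := f.q0 - 1 - (f.h2 + f.h0 - 1 - x)) (y := f.q0 + x) (-1) rfl
        (by rw [tw2]; ring)]
      exact orbRel_refl _ _
  · refine forall_zmod_three.2 ⟨fun x x0 x1 => ?_, fun x x0 x1 => ?_, fun x x0 x1 => ?_⟩ <;>
      simp only [h_zero, h_one, h_two, e1, e2, e3, q_zero, q_one, q_two] at x1 ⊢
    · rw [slide_pt_zero_of_le h (x + f.q0) 0 (by ring) hp.1 (by omega) (by omega),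
        slide_pt_one h]
      exact (orbRel_two_of_eq hg x 0 0 e2 x0 (by rw [h_one]; omega) (by ring) (by ring)).symm
    · rw [slide_pt_one h, slide_pt_two h]
      refine OrbRel.trans
        (orbRel_two_of_eq (i := 0) (j := 1) (x := x) hg x 0 0 e1 x0 (by rw [h_zero]; omega)
          (by ring) (by ring)).symm
        (orbRel_three_of_eq (i := 2) (j := 0) hg (f.h2 + f.h0 - 1 - x - f.q0) (-1 - m) 0 e3
          (by omega) (by rw [h_two]; omega) (by rw [q_two, gq2, tw2]; ring)
          (by rw [q_zero, gq0, tw0]; ring)).symm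
    · rw [slide_pt_two h]
      by_cases hc : f.q0 - f.h0 ≤ x ∧ x < f.q0
      · rw [slide_pt_zero_of_lt h (f.q0 - 1 - x) 0 (by ring) (by omega) (by omega)]
        exact (orbRel_three_of_eq hg (f.q0 - 1 - x) 0 (-m) e2 (by omega) (by rw [h_one]; omega)
          (by rw [q_one, gq1]; ring) (by rw [q_two, gq2, tw2]; ring)).symm
      · obtain ⟨k, k0, k1⟩ : ∃ k, 0 ≤ x - f.q0 + (f.h2 + f.h0) * k ∧
            x - f.q0 + (f.h2 + f.h0) * k < f.h2 := by
          rcases lt_or_ge x f.q0 with hx | hx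
          · exact ⟨1, by omega, by omega⟩
          · exact ⟨0, by omega, by omega⟩
        have hs : slide f (pt f 0 (-1 - x + f.q0)) = pt g 2 x := by
          rw [slide_pt_zero_of_le h (f.q0 - 1 - x + (f.h2 + f.h0) * (1 - k)) (k - 1) (by ring)
            hp.1 (by linarith) (by linarith)]
          exact pt_congr (k - 1) rfl (by rw [tw2]; ring)
        rw [hs]
        refine OrbRel.trans (orbRel_three_of_eq (i := 2) (j := 0) (y := -1 - x) hg _ (-k - m)
          (k - 1) e3 k0 (by rwa [h_two, g2]) (by rw [q_two, gq2, tw2]; ring)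
          (by rw [q_zero, gq0, tw0]; ring))
          (orbRel_two_of_eq hg x 0 0 e3 x0 (by rw [h_two]; omega) (by ring) (by ring)).symm

theorem slide_slide (h : LevelMove f g) (hf : Good f) {a : ZMod 3 × ℤ} (ha : a ∈ Vtx f) :
    OrbRel f {2, 3} (slide g (slide f a)) a := by
  have hp := ((good_iff f).1 hf).1
  obtain ⟨f1, g0, g1, g2, lo, hi, gq0, gq1, m, gq2⟩ := id h
  have key : ∀ i x, OrbRel f {2, 3} (slide g (slide f (pt f i x))) (pt f i x) := by
    refine forall_zmod_three.2 ⟨fun x => ?_, fun x => ?_, fun x => ?_⟩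
    · have hm := Int.emod_add_mul_ediv x (f.h2 + f.h0)
      have := Int.emod_nonneg x (b := f.h2 + f.h0) (by omega)
      have := Int.emod_lt_of_pos x (b := f.h2 + f.h0) (by omega)
      by_cases hc : x % (f.h2 + f.h0) < f.h0
      · rw [slide_pt_zero_of_lt h _ _ hm.symm (by omega) hc, slide_pt_one h.symm]
        exact (orbRel_two_of_eq hf (x % (f.h2 + f.h0)) (x / (f.h2 + f.h0)) 0 (by decide)
          (by omega) (by rwa [h_zero]) (by rw [twol_zero, hm]) (by rw [gq1]; ring)).symm
      · rw [slide_pt_zero_of_le h _ _ hm.symm hp.1 (by omega) (by omega), slide_pt_two h.symm]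
        exact (orbRel_two_of_eq hf (f.h0 + f.h2 - 1 - x % (f.h2 + f.h0)) 0
          (1 + x / (f.h2 + f.h0)) (by decide) (by omega) (by rw [h_two]; omega)
          (by rw [gq0]; ring) (by rw [twol_zero]; linarith))
    · rw [slide_pt_one h, slide_pt_one h.symm, gq1]
      convert orbRel_refl _ _ using 2; ring
    · rw [slide_pt_two h, slide_pt_two h.symm, gq0,
        pt_congr (g := f) (y := x) 1 rfl (by rw [twol_two, f1]; ring)]
      exact orbRel_refl _ _
  rw [← pt_of_mem ha]; exact key _ _

theorem LevelMove.admissible (h : LevelMove f g) (hf : Admissible f) (hg : Good g) : Admissible g :=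
  ⟨hg.1, hg.2, hf.2.2.transfer (mapsOrbits_slide h hf.good hg)
    (mapsOrbits_slide h.symm hg hf.good) (fun _ => slide_slide h hf.good)
    (fun _ => slide_slide h.symm hg)⟩

end Slide

/-! ### The algebra of `σ` -/

/-- The defining cases of `σ`, with the last two `q`-entries given as congruences. -/
inductive SigmaRel (f g : Tuple) : Prop
  | fixed (hq : f.q0 = 0) (e : g = f)
  | small (hq : 0 < f.q0) (c0 : f.q0 < f.h0) (c2 : f.q0 < f.h2)
      (e0 : g.h0 = f.h0 + f.h1 - f.q0) (e1 : g.h1 = f.q0) (e2 : g.h2 = f.h2 + f.h1 - f.q0)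
      (eq0 : g.q0 = f.h0 + f.h1 + f.h2 - 2 * f.q0)
      (k l : ℤ) (eq1 : g.q1 = f.q0 + f.q1 + f.h1 + (f.h0 + f.h1) * k)
      (eq2 : g.q2 = f.q0 + f.q2 + f.h1 + (f.h1 + f.h2) * l)
  | large (c0 : f.h0 < f.q0) (c2 : f.h2 < f.q0)
      (e0 : g.h0 = f.q0 + f.h1 - f.h2) (e1 : g.h1 = f.h0 + f.h2 - f.q0)
      (e2 : g.h2 = f.q0 + f.h1 - f.h0) (eq0 : g.q0 = f.h1)
      (k l : ℤ) (eq1 : g.q1 = f.q0 + f.q1 - f.h2 + (f.h0 + f.h1) * k)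
      (eq2 : g.q2 = f.q0 + f.q2 - f.h0 + (f.h1 + f.h2) * l)
  | left (c0 : f.h0 < f.q0) (c2 : f.q0 < f.h2)
      (e0 : g.h0 = f.h1) (e1 : g.h1 = f.h0) (e2 : g.h2 = f.h1 + f.h2 - f.h0)
      (eq0 : g.q0 = f.h1 + f.h2 - f.q0)
      (k l : ℤ) (eq1 : g.q1 = f.q1 + (f.h0 + f.h1) * k)
      (eq2 : g.q2 = 2 * f.q0 + f.q2 + f.h1 - f.h0 + (f.h1 + f.h2) * l)
  | right (c0 : f.q0 < f.h0) (c2 : f.h2 < f.q0)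
      (e0 : g.h0 = f.h1 + f.h0 - f.h2) (e1 : g.h1 = f.h2) (e2 : g.h2 = f.h1)
      (eq0 : g.q0 = f.h1 + f.h0 - f.q0)
      (k l : ℤ) (eq1 : g.q1 = 2 * f.q0 + f.q1 + f.h1 - f.h2 + (f.h0 + f.h1) * k)
      (eq2 : g.q2 = f.q2 + (f.h1 + f.h2) * l)

theorem emod_eq_add_mul (x m : ℤ) : ∃ k, x % m = x + m * k :=
  ⟨-(x / m), by rw [Int.emod_def]; ring⟩

theorem eq_emod {x y m k : ℤ} (h : x = y + m * k) (h0 : 0 ≤ x) (h1 : x < m) : x = y % m := by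
  rw [← Int.emod_eq_of_lt h0 h1, h, Int.add_mul_emod_self_left]

theorem Good.q0_ne {f : Tuple} (hf : Good f) : f.q0 ≠ f.h0 ∧ f.q0 ≠ f.h2 := by
  rw [good_iff] at hf
  have := hf.2.2.2.2.2.1
  have := hf.2.1
  omega

theorem sigmaRel_sigma {f : Tuple} (hf : Good f) : SigmaRel f (sigma f) := by
  obtain ⟨n0, n2⟩ := hf.q0_ne
  rw [good_iff] at hf
  obtain ⟨⟨p0, p1, p2⟩, -, r0, r1, r2, -⟩ := hf
  unfold sigma
  split_ifs with c1 c2 c3 c4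
  · exact .fixed c1 rfl
  · obtain ⟨k, hk⟩ := emod_eq_add_mul (f.q0 + f.q1 + f.h1) (f.h0 + f.h1)
    obtain ⟨l, hl⟩ := emod_eq_add_mul (f.q0 + f.q2 + f.h1) (f.h1 + f.h2)
    refine .small (by omega) c2.1 c2.2 rfl rfl rfl (Int.emod_eq_of_lt ?_ ?_) k l ?_ ?_
    · omega
    · omega
    · simp only [← hk]; congr 1; ring
    · simp only [← hl]; congr 1; ring
  · obtain ⟨k, hk⟩ := emod_eq_add_mul (f.q0 + f.q1 - f.h2) (f.h0 + f.h1)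
    obtain ⟨l, hl⟩ := emod_eq_add_mul (f.q0 + f.q2 - f.h0) (f.h1 + f.h2)
    refine .large c3.1 c3.2 rfl rfl rfl (Int.emod_eq_of_lt ?_ ?_) k l ?_ ?_
    · omega
    · omega
    · simp only [← hk]; congr 1; ring
    · simp only [← hl]; congr 1; ring
  · obtain ⟨k, hk⟩ := emod_eq_add_mul f.q1 (f.h0 + f.h1)
    obtain ⟨l, hl⟩ := emod_eq_add_mul (2 * f.q0 + f.q2 + f.h1 - f.h0) (f.h1 + f.h2)
    refine .left (by omega) c4 rfl rfl rfl (Int.emod_eq_of_lt ?_ ?_) k l ?_ ?_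
    · omega
    · omega
    · simp only [← hk]; congr 1; ring
    · simp only [← hl]; congr 1; ring
  · obtain ⟨k, hk⟩ := emod_eq_add_mul (2 * f.q0 + f.q1 + f.h1 - f.h2) (f.h0 + f.h1)
    obtain ⟨l, hl⟩ := emod_eq_add_mul f.q2 (f.h1 + f.h2)
    refine .right (by omega) (by omega) rfl rfl rfl (Int.emod_eq_of_lt ?_ ?_) k l ?_ ?_
    · omega
    · omega
    · simp only [← hk]; congr 1; ring
    · simp only [← hl]; congr 1; ring

theorem SigmaRel.eq_sigma {f g : Tuple} (h : SigmaRel f g) (hf : Good f) (hg : Good g) :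
    sigma f = g := by
  rw [good_iff] at hf hg
  obtain ⟨⟨p0, p1, p2⟩, -, r0, r1, r2, -⟩ := hf
  obtain ⟨-, -, s0, s1, s2, -⟩ := hg
  have ext : ∀ {x y z a b c m n k l : ℤ}, g.h0 = x → g.h1 = y → g.h2 = z → g.q0 = a →
      g.q1 = b + m * k → g.q2 = c + n * l → m = x + y → n = y + z →
      (⟨x, y, z, a % (z + x), b % (x + y), c % (y + z)⟩ : Tuple) = g := by
    intro x y z a b c m n k l e0 e1 e2 eq0 eq1 eq2 hm hn
    subst e0 e1 e2 eq0 hm hn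
    rw [← eq_emod eq1 s1.1 s1.2, ← eq_emod eq2 s2.1 s2.2, Int.emod_eq_of_lt s0.1 s0.2]
  unfold sigma
  rcases h with ⟨hq, rfl⟩ | ⟨hq, c0, c2, e0, e1, e2, eq0, k, l, eq1, eq2⟩ |
    ⟨c0, c2, e0, e1, e2, eq0, k, l, eq1, eq2⟩ | ⟨c0, c2, e0, e1, e2, eq0, k, l, eq1, eq2⟩ |
    ⟨c0, c2, e0, e1, e2, eq0, k, l, eq1, eq2⟩
  · rw [if_pos hq]
  · rw [if_neg (by omega), if_pos (by omega)]
    exact ext e0 e1 e2 eq0 eq1 eq2 (by ring) (by ring)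
  · rw [if_neg (by omega), if_neg (by omega), if_pos (by omega)]
    exact ext e0 e1 e2 eq0 eq1 eq2 (by ring) (by ring)
  · rw [if_neg (by omega), if_neg (by omega), if_neg (by omega), if_pos (by omega)]
    exact ext e0 e1 e2 eq0 eq1 eq2 (by ring) (by ring)
  · rw [if_neg (by omega), if_neg (by omega), if_neg (by omega), if_neg (by omega)]
    exact ext e0 e1 e2 eq0 eq1 eq2 (by ring) (by ring)

set_option linter.unusedSimpArgs false in
theorem SigmaRel.symm {f g : Tuple} (h : SigmaRel f g) (hf : Good f) : SigmaRel g f := by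
  rw [good_iff] at hf
  obtain ⟨⟨p0, p1, p2⟩, -, r0, r1, r2, -⟩ := hf
  rcases h with ⟨hq, rfl⟩ | ⟨hq, c0, c2, e0, e1, e2, eq0, k, l, eq1, eq2⟩ |
    ⟨c0, c2, e0, e1, e2, eq0, k, l, eq1, eq2⟩ | ⟨c0, c2, e0, e1, e2, eq0, k, l, eq1, eq2⟩ |
    ⟨c0, c2, e0, e1, e2, eq0, k, l, eq1, eq2⟩
  · exact .fixed hq rfl
  · refine .large ?_ ?_ ?_ ?_ ?_ ?_ (-k - 1) (-l - 1) ?_ ?_ <;>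
      first | omega | (simp only [e0, e1, e2, eq0, eq1, eq2]; ring)
  · refine .small ?_ ?_ ?_ ?_ ?_ ?_ ?_ (-k - 1) (-l - 1) ?_ ?_ <;>
      first | omega | (simp only [e0, e1, e2, eq0, eq1, eq2]; ring)
  · refine .left ?_ ?_ ?_ ?_ ?_ ?_ (-k) (-l - 2) ?_ ?_ <;>
      first | omega | (simp only [e0, e1, e2, eq0, eq1, eq2]; ring)
  · refine .right ?_ ?_ ?_ ?_ ?_ ?_ (-k - 2) (-l) ?_ ?_ <;>
      first | omega | (simp only [e0, e1, e2, eq0, eq1, eq2]; ring)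

set_option linter.unusedSimpArgs false in
theorem SigmaRel.psi2 {f g : Tuple} (h : SigmaRel f g) : SigmaRel (psi2 f) (psi2 g) := by
  rcases h with ⟨hq, rfl⟩ | ⟨hq, c0, c2, e0, e1, e2, eq0, k, l, eq1, eq2⟩ |
    ⟨c0, c2, e0, e1, e2, eq0, k, l, eq1, eq2⟩ | ⟨c0, c2, e0, e1, e2, eq0, k, l, eq1, eq2⟩ |
    ⟨c0, c2, e0, e1, e2, eq0, k, l, eq1, eq2⟩
  · exact .fixed hq rfl
  · refine .small ?_ ?_ ?_ ?_ ?_ ?_ ?_ l k ?_ ?_ <;> simp only [GMN.psi2] <;>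
      first | omega | (simp only [e0, e1, e2, eq0, eq1, eq2]; ring)
  · refine .large ?_ ?_ ?_ ?_ ?_ ?_ l k ?_ ?_ <;> simp only [GMN.psi2] <;>
      first | omega | (simp only [e0, e1, e2, eq0, eq1, eq2]; ring)
  · refine .right ?_ ?_ ?_ ?_ ?_ ?_ l k ?_ ?_ <;> simp only [GMN.psi2] <;>
      first | omega | (simp only [e0, e1, e2, eq0, eq1, eq2]; ring)
  · refine .left ?_ ?_ ?_ ?_ ?_ ?_ l k ?_ ?_ <;> simp only [GMN.psi2] <;>
      first | omega | (simp only [e0, e1, e2, eq0, eq1, eq2]; ring)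

set_option linter.unusedSimpArgs false in
theorem SigmaRel.psi3 {f g : Tuple} (h : SigmaRel f g) (hf : Good f) (hg : Good g) :
    SigmaRel (psi3 f) (psi3 g) := by
  have k1 := emod_eq_add_mul (-f.q1) (f.h0 + f.h1)
  have k2 := emod_eq_add_mul (-f.q2) (f.h1 + f.h2)
  have l1 := emod_eq_add_mul (-g.q1) (g.h0 + g.h1)
  have l2 := emod_eq_add_mul (-g.q2) (g.h1 + g.h2)
  rw [good_iff] at hf hg
  obtain ⟨⟨p0, p1, p2⟩, -, r0, -⟩ := hf
  obtain ⟨-, -, s0, -⟩ := hg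
  have n0 := neg_emod_cases r0.1 r0.2
  have m0 := neg_emod_cases s0.1 s0.2
  obtain ⟨a, ha⟩ := k1
  obtain ⟨b, hb⟩ := k2
  obtain ⟨c, hc⟩ := l1
  obtain ⟨d, hd⟩ := l2
  rcases h with ⟨hq, rfl⟩ | ⟨hq, c0, c2, e0, e1, e2, eq0, k, l, eq1, eq2⟩ |
    ⟨c0, c2, e0, e1, e2, eq0, k, l, eq1, eq2⟩ | ⟨c0, c2, e0, e1, e2, eq0, k, l, eq1, eq2⟩ |
    ⟨c0, c2, e0, e1, e2, eq0, k, l, eq1, eq2⟩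
  · exact .fixed (by simp [GMN.psi3, hq]) rfl
  · have n : (-f.q0) % (f.h2 + f.h0) = f.h2 + f.h0 - f.q0 := by omega
    refine .large ?_ ?_ ?_ ?_ ?_ ?_ (-k + c - a - 1) (-l + d - b - 1) ?_ ?_ <;>
      simp only [GMN.psi3] <;>
      first | omega | (simp only [ha, hb, hc, hd, n]; simp only [e0, e1, e2, eq1, eq2]; ring)
  · have n : (-f.q0) % (f.h2 + f.h0) = f.h2 + f.h0 - f.q0 := by omega
    refine .small ?_ ?_ ?_ ?_ ?_ ?_ ?_ (-k + c - a - 1) (-l + d - b - 1) ?_ ?_ <;>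
      simp only [GMN.psi3] <;>
      first | omega | (simp only [ha, hb, hc, hd, n]; simp only [e0, e1, e2, eq1, eq2]; ring)
  · have n : (-f.q0) % (f.h2 + f.h0) = f.h2 + f.h0 - f.q0 := by omega
    refine .left ?_ ?_ ?_ ?_ ?_ ?_ (-k + c - a) (-l + d - b - 2) ?_ ?_ <;>
      simp only [GMN.psi3] <;>
      first | omega | (simp only [ha, hb, hc, hd, n]; simp only [e0, e1, e2, eq1, eq2]; ring)
  · have n : (-f.q0) % (f.h2 + f.h0) = f.h2 + f.h0 - f.q0 := by omega
    refine .right ?_ ?_ ?_ ?_ ?_ ?_ (-k + c - a - 2) (-l + d - b) ?_ ?_ <;>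
      simp only [GMN.psi3] <;>
      first | omega | (simp only [ha, hb, hc, hd, n]; simp only [e0, e1, e2, eq1, eq2]; ring)

theorem nu_psi1 (f : Tuple) : nu (psi1 f) = nu f := by
  simp only [nu, psi1]; ring

theorem nu_psi2 (f : Tuple) : nu (psi2 f) = nu f := by
  simp only [nu, psi2]; ring

theorem nu_psi3 (f : Tuple) : nu (psi3 f) = nu f := rfl

theorem sigma_sigma {f : Tuple} (hf : Good f) (hg : Good (sigma f)) : sigma (sigma f) = f :=
  ((sigmaRel_sigma hf).symm hf).eq_sigma hg hf

theorem sigma_psi2 {f : Tuple} (hf : Good f) (hg : Good (sigma f)) :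
    sigma (psi2 f) = psi2 (sigma f) :=
  (sigmaRel_sigma hf).psi2.eq_sigma hf.psi2 hg.psi2

theorem sigma_psi3 {f : Tuple} (hf : Good f) (hg : Good (sigma f)) :
    sigma (psi3 f) = psi3 (sigma f) :=
  ((sigmaRel_sigma hf).psi3 hf hg).eq_sigma hf.psi3 hg.psi3

/-- The tuples, up to `ψ₂`, whose complexity is preserved by `σ` in a possibly nontrivial way. -/
def Level (f : Tuple) : Prop :=
  (f.h1 = f.h0 ∧ f.h0 < f.q0 ∧ f.q0 < f.h2) ∨ (f.h1 = f.h2 ∧ f.h2 < f.q0 ∧ f.q0 < f.h0)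

theorem Level.psi2 {f : Tuple} (h : Level f) : Level (psi2 f) := h.symm

theorem Level.psi3 {f : Tuple} (h : Level f) (hf : Good f) : Level (psi3 f) := by
  rw [good_iff] at hf
  have := neg_emod_cases hf.2.2.1.1 hf.2.2.1.2
  simp only [Level, GMN.psi3] at *
  omega

theorem h1_lt_of_nu_sigma_lt {f : Tuple} (hf : Good f) (h : nu (sigma f) < nu f) :
    f.h1 < f.h0 ∧ f.h1 < f.h2 := by
  simp only [nu] at h
  rcases sigmaRel_sigma hf with ⟨hq, e⟩ | _ | _ | _ | _
  · rw [e] at h; omega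
  all_goals omega

theorem sigma_eq_or_nu_lt {f : Tuple} (hf : Good f) (h : f.h0 < f.h1 ∨ f.h2 < f.h1) :
    sigma f = f ∨ nu f < nu (sigma f) := by
  simp only [nu]
  rcases sigmaRel_sigma hf with ⟨hq, e⟩ | _ | _ | _ | _
  · exact .inl e
  all_goals right; omega

theorem sigma_eq_or_level {f : Tuple} (hf : Good f) (h : nu (sigma f) = nu f) :
    sigma f = f ∨ Level f := by
  have h' := sigmaRel_sigma hf
  rw [good_iff] at hf
  obtain ⟨-, ⟨par0, par1⟩, -, -, -, par2, -⟩ := hf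
  simp only [nu] at h
  rcases h' with ⟨hq, e⟩ | _ | _ | _ | _
  · exact .inl e
  all_goals right; unfold Level; omega

theorem levelMove_sigma {f : Tuple} (hf : Good f) (e : f.h1 = f.h0) (c0 : f.h0 < f.q0)
    (c2 : f.q0 < f.h2) : LevelMove f (sigma f) ∧ Good (sigma f) := by
  have par : ∀ {a b k t : ℤ}, (a + b) % 2 = 1 → a % 2 = b % 2 → False := by omega
  have hm := emod_eq_add_mul (2 * f.q0 + f.q2) (f.h0 + f.h2)
  rw [good_iff] at *
  obtain ⟨⟨p0, p1, p2⟩, ⟨par0, par1⟩, r0, r1, r2, s0, s1, s2⟩ := hf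
  have hσ : sigma f = ⟨f.h0, f.h0, f.h2, f.h0 + f.h2 - f.q0, f.q1,
      (2 * f.q0 + f.q2) % (f.h0 + f.h2)⟩ := by
    rw [sigma, if_neg (by omega), if_neg (by omega), if_neg (by omega), if_pos (by omega)]
    rw [e, add_sub_cancel_left, Int.emod_eq_of_lt (a := f.q1) r1.1 (by omega),
      Int.emod_eq_of_lt (a := f.h0 + f.h2 - f.q0) (by omega) (by omega), add_sub_cancel_right]
  have hn := Int.emod_nonneg (2 * f.q0 + f.q2) (b := f.h0 + f.h2) (by omega)
  have hl := Int.emod_lt_of_pos (2 * f.q0 + f.q2) (b := f.h0 + f.h2) (by omega)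
  have hpar : ((2 * f.q0 + f.q2) % (f.h0 + f.h2)) % 2 = f.q2 % 2 := by
    rw [Int.emod_emod_of_dvd _ (by omega)]; omega
  rw [hσ]
  obtain ⟨k, hk⟩ := hm
  refine ⟨⟨e, rfl, rfl, rfl, c0, c2, rfl, rfl, k, ?_⟩, ⟨p0, p0, p2⟩, ⟨rfl, ?_⟩,
    ?_, ?_, ?_, ?_, ?_, ?_⟩
  · simp only [hk]; ring
  all_goals simp only
  all_goals omega

/-! ### `H`-equivalence -/

theorem HEquiv.admissible {a b : Tuple} (h : HEquiv a b) : Admissible a ↔ Admissible b := by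
  induction h with
  | rel _ _ h => exact iff_of_true h.1 h.2.1
  | refl _ => rfl
  | symm _ _ _ ih => exact ih.symm
  | trans _ _ _ _ _ ih1 ih2 => exact ih1.trans ih2

theorem HEquiv.nu_eq {a b : Tuple} (h : HEquiv a b) : nu a = nu b := by
  induction h with
  | rel _ _ h =>
    rcases h.2.2 with rfl | rfl | rfl
    exacts [(nu_psi1 _).symm, (nu_psi2 _).symm, (nu_psi3 _).symm]
  | refl _ => rfl
  | symm _ _ _ ih => exact ih.symm
  | trans _ _ _ _ _ ih1 ih2 => exact ih1.trans ih2

theorem HEquiv.gEquiv {a b : Tuple} (h : HEquiv a b) : GEquiv a b :=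
  h.mono fun _ _ h => ⟨h.1, h.2.1, h.2.2.imp_right (Or.imp_right .inl)⟩

theorem hEquiv_psi1 {a : Tuple} (h : Admissible a) : HEquiv a (psi1 a) :=
  .rel _ _ ⟨h, h.psi1, .inl rfl⟩

theorem hEquiv_psi2 {a : Tuple} (h : Admissible a) : HEquiv a (psi2 a) :=
  .rel _ _ ⟨h, h.psi2, .inr (.inl rfl)⟩

theorem hEquiv_psi3 {a : Tuple} (h : Admissible a) : HEquiv a (psi3 a) :=
  .rel _ _ ⟨h, h.psi3, .inr (.inr rfl)⟩

/-- Some cyclic rotation of the tuple satisfies `Q`. -/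
def SomeRotation (Q : Tuple → Prop) (f : Tuple) : Prop := Q f ∨ Q (psi1 f) ∨ Q (psi1 (psi1 f))

/-- `Q` is inherited by the images under `ψ₂` and `ψ₃` of admissible tuples. -/
structure Reflecting (Q : Tuple → Prop) : Prop where
  psi2 : ∀ f, Admissible f → Q f → Q (psi2 f)
  psi3 : ∀ f, Admissible f → Q f → Q (psi3 f)

namespace Reflecting

variable {Q : Tuple → Prop}

theorem psi2_iff (h : Reflecting Q) {f : Tuple} (hf : Admissible f) : Q (GMN.psi2 f) ↔ Q f :=
  ⟨fun hq => h.psi2 _ hf.psi2 hq, h.psi2 f hf⟩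

theorem psi3_iff (h : Reflecting Q) {f : Tuple} (hf : Admissible f) : Q (GMN.psi3 f) ↔ Q f :=
  ⟨fun hq => by simpa [psi3_psi3 hf.good] using h.psi3 _ hf.psi3 hq, h.psi3 f hf⟩

theorem someRotation_iff (h : Reflecting Q) {a b : Tuple} (hab : HEquiv a b) :
    SomeRotation Q a ↔ SomeRotation Q b := by
  induction hab with
  | rel a b hab =>
    obtain ⟨ha, -, rfl | rfl | rfl⟩ := hab
    · simp only [SomeRotation, psi1_psi1_psi1]; tauto
    · have e1 : psi1 (GMN.psi2 a) = GMN.psi2 (psi1 (psi1 a)) := rfl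
      have e2 : psi1 (GMN.psi2 (psi1 (psi1 a))) = GMN.psi2 (psi1 a) := rfl
      simp only [SomeRotation, e1, e2, h.psi2_iff ha, h.psi2_iff ha.psi1, h.psi2_iff ha.psi1.psi1]
      tauto
    · have e : ∀ a, psi1 (GMN.psi3 a) = GMN.psi3 (psi1 a) := fun _ => rfl
      simp only [SomeRotation, e, h.psi3_iff ha, h.psi3_iff ha.psi1, h.psi3_iff ha.psi1.psi1]
  | refl _ => rfl
  | symm _ _ _ ih => exact ih.symm
  | trans _ _ _ _ _ ih1 ih2 => exact ih1.trans ih2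

theorem not (h : Reflecting Q) : Reflecting fun f => ¬ Q f :=
  ⟨fun _ hf => mt (h.psi2_iff hf).1, fun _ hf => mt (h.psi3_iff hf).1⟩

end Reflecting

/-! ### Level moves realised by elements of `H` -/

/-- Case b) of the characterisation of roots. -/
def Exceptional (f : Tuple) : Prop :=
  f.h0 = f.h1 ∧ f.h0 < f.q0 ∧ f.q0 < f.h2 ∧
    f.q0 ≠ (-f.q2) % (f.h1 + f.h2) ∧ 2 * f.q0 ≠ f.h0 + f.h2 ∧
    (f.q1 = 0 → f.q0 ≠ ((f.h0 + f.h2) / 2 - f.q2) % (f.h2 + f.h0))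

theorem tuple_ext {f g : Tuple} (h0 : f.h0 = g.h0) (h1 : f.h1 = g.h1) (h2 : f.h2 = g.h2)
    (q0 : f.q0 = g.q0) (q1 : f.q1 = g.q1) (q2 : f.q2 = g.q2) : f = g := by
  cases f; cases g; simp_all

theorem psi3_psi2 (f : Tuple) : psi3 (psi2 f) = psi2 (psi3 f) := by
  simp only [psi2, psi3, add_comm]

/-- The images of `f` under the group generated by `ψ₂` and `ψ₃`. -/
def Images (f g : Tuple) : Prop :=
  g = f ∨ g = psi2 f ∨ g = psi3 f ∨ g = psi2 (psi3 f)

theorem reflecting_images {f : Tuple} (hf : Good f) : Reflecting (Images f) := by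
  refine ⟨?_, ?_⟩
  · rintro g - (rfl | rfl | rfl | rfl) <;> simp [Images, psi2_psi2]
  · rintro g - (rfl | rfl | rfl | rfl) <;>
      simp [Images, psi3_psi2, psi3_psi3 hf]

theorem LevelMove.eq_of_congr {f g g' : Tuple} (h : LevelMove f g) (hg : Good g) (hg' : Good g')
    (h0 : g'.h0 = f.h0) (h1 : g'.h1 = f.h0) (h2 : g'.h2 = f.h2) (q0 : g'.q0 = f.h0 + f.h2 - f.q0)
    (q1 : g'.q1 = f.q1) (k : ℤ) (q2 : g'.q2 = f.q2 + 2 * f.q0 + (f.h0 + f.h2) * k) : g = g' := by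
  obtain ⟨l, hl⟩ := h.g_q2
  obtain ⟨a0, a1⟩ := ((good_iff g).1 hg).2.2.2.2.1
  obtain ⟨b0, b1⟩ := ((good_iff g').1 hg').2.2.2.2.1
  clear hg hg'
  have e0 := h.g_h0
  have e1 := h.g_h1
  have e2 := h.g_h2
  refine tuple_ext (e0.trans h0.symm) (e1.trans h1.symm) (e2.trans h2.symm)
    (h.g_q0.trans q0.symm) (h.g_q1.trans q1.symm) ?_
  rw [eq_emod hl a0 (by rwa [e1, e2] at a1), eq_emod q2 b0 (by rwa [h1, h2] at b1)]

theorem LevelMove.hEquiv_of_not_exceptional {f g : Tuple} (h : LevelMove f g) (hf : Admissible f)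
    (hg : Good g) (he : ¬ Exceptional f) : HEquiv f g := by
  have hsw := hf.psi2.psi1
  have h3 := hf.psi3
  have hgood := (good_iff _).1 hf.good
  obtain ⟨⟨p0, p1, p2⟩, ⟨par0, par1⟩, r0, r1, r2, -⟩ := hgood
  have c0 := h.lt_q0
  have c2 := h.q0_lt
  have e1 := h.f_h1
  have hcases : f.q0 = (-f.q2) % (f.h1 + f.h2) ∨ 2 * f.q0 = f.h0 + f.h2 ∨
      (f.q1 = 0 ∧ f.q0 = ((f.h0 + f.h2) / 2 - f.q2) % (f.h2 + f.h0)) := by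
    by_contra hc
    push Not at hc
    exact he ⟨e1.symm, c0, c2, hc⟩
  rcases hcases with hc | hc | ⟨hq1, hc⟩
  · have n2 := neg_emod_cases r2.1 r2.2
    rw [h.eq_of_congr (g' := psi1 (psi2 f)) hg hsw.good e1 rfl rfl
      (by simp only [psi1, psi2]; omega)
      rfl (-1) (by simp only [psi1, psi2]; omega)]
    exact (hEquiv_psi2 hf).trans _ _ _ (hEquiv_psi1 hf.psi2)
  · rw [h.eq_of_congr (g' := f) hg hf.good rfl e1 rfl (by omega) rfl (-1) (by omega)]
    exact .refl _
  · have n0 := neg_emod_cases r0.1 r0.2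
    obtain ⟨l, hl⟩ := emod_eq_add_mul ((f.h0 + f.h2) / 2 - f.q2) (f.h2 + f.h0)
    obtain ⟨k, hk⟩ := emod_eq_add_mul (-f.q2) (f.h1 + f.h2)
    have hl2 : 2 * ((f.h0 + f.h2) / 2) = f.h0 + f.h2 := by omega
    rw [h.eq_of_congr (g' := psi3 f) hg h3.good rfl e1 rfl (by simp only [psi3]; omega)
      (by simp [psi3, hq1]) (k - 1 - 2 * l) (by
        simp only [psi3]; rw [hk, hc, hl, e1]; linear_combination -hl2)]
    exact hEquiv_psi3 hf

theorem eq_emod_or_add_eq {l x y n : ℤ} (x0 : 0 < x) (x1 : x < 2 * l) (y0 : 0 ≤ y)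
    (y1 : y < 2 * l) (h : x + y = l * n) : x = (l - y) % (2 * l) ∨ x + y = 2 * l := by
  have n_pos : 0 < n := by by_contra hc; nlinarith
  have n_lt : n < 4 := by by_contra hc; nlinarith
  interval_cases n
  · exact .inl (eq_emod (k := 0) (by omega) x0.le x1)
  · exact .inr (by omega)
  · exact .inl (eq_emod (k := 1) (by omega) x0.le x1)

theorem LevelMove.not_hEquiv_of_exceptional {f g : Tuple} (h : LevelMove f g) (hf : Admissible f)
    (he : Exceptional f) : ¬ HEquiv f g := by
  intro hfg
  have hgood := (good_iff _).1 hf.good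
  obtain ⟨⟨p0, p1, p2⟩, ⟨par0, par1⟩, r0, r1, r2, s0, s1, s2⟩ := hgood
  obtain ⟨-, c0, c2, x1, x2, x3⟩ := he
  obtain ⟨e1, g0, g1, g2, -, -, gq0, gq1, k, hk⟩ := h
  have hQ := ((reflecting_images hf.psi1.good).someRotation_iff hfg).1 (.inr (.inl (.inl rfl)))
  have n0 := (neg_emod_cases r0.1 r0.2).resolve_left (by omega)
  have n1 : f.q1 = (-f.q1) % (f.h0 + f.h1) → f.q1 = 0 := by
    intro h
    have := neg_emod_cases r1.1 r1.2
    clear x1 x3 hk hQ n0 s0 s2 par1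
    omega
  have key : f.q1 = 0 → ∀ n, 2 * (f.q0 + f.q2) = (f.h0 + f.h2) * n → False := by
    intro hq n hn
    have x3' := x3 hq
    clear x3 n0 n1 hQ hk hq
    obtain ⟨l, hl⟩ : ∃ l, f.h0 + f.h2 = 2 * l := ⟨(f.h0 + f.h2) / 2, by omega⟩
    rw [add_comm, hl] at r0
    rw [e1, hl] at r2
    rw [add_comm f.h2, hl, Int.mul_ediv_cancel_left _ two_ne_zero] at x3'
    rw [e1, hl] at x1
    have hn' : f.q0 + f.q2 = l * n := by rw [hl] at hn; linarith
    rcases eq_emod_or_add_eq (by linarith) r0.2 r2.1 r2.2 hn' with h | h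
    · exact x3' h
    · exact x1 (eq_emod (k := 1) (by linarith) r0.1 r0.2)
  have n2 := neg_emod_cases r2.1 r2.2
  clear s0 s1 s2 par0 par1 x3
  have hne : f.h0 ≠ f.h2 := by linarith
  rcases hQ with hQ | hQ | hQ
  · have : g.h1 = f.h2 := by rcases hQ with rfl | rfl | rfl | rfl <;> rfl
    exact hne (g1.symm.trans this)
  · simp only [Images, psi1, psi2, psi3, Tuple.mk.injEq] at hQ
    obtain hQ | hQ | hQ | hQ := hQ
    · exact x2 (by linarith [hQ.2.2.2.2.2])
    · refine x1 (eq_emod (k := 1) ?_ r0.1 (by rw [e1]; linarith))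
      linarith [hQ.2.2.2.2.2]
    · obtain ⟨-, -, -, y1, y2, -⟩ := hQ
      obtain ⟨j, hj⟩ := emod_eq_add_mul (-f.q2) (f.h1 + f.h2)
      refine key (n1 (gq1.symm.trans y1)) (j - k) ?_
      rw [hj, hk, e1] at y2
      linear_combination y2
    · obtain ⟨-, -, -, y1, y2, y3⟩ := hQ
      have hq : f.q2 = f.q0 := by
        rw [gq0] at y3
        rcases n2 with n2 | n2
        · linarith
        · linarith
      refine key (n1 (gq1.symm.trans y1)) (1 - k) ?_
      rw [n0.2, hk] at y2
      linear_combination y2 + hq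
  · have : g.h0 = f.h2 := by
      rcases hQ with hQ | hQ | hQ | hQ <;> exact congrArg Tuple.h1 hQ
    exact hne (g0.symm.trans this)

/-! ### Level moves at canonical tuples -/

theorem HEquiv.right_admissible {a b : Tuple} (h : HEquiv a b) (ha : Admissible a) :
    Admissible b :=
  h.admissible.1 ha

theorem HEquiv.sigma_psi2 {z t : Tuple} (hz : Admissible z) (ht : Admissible t)
    (h : HEquiv z (sigma t)) : HEquiv z (sigma (psi2 t)) := by
  have ha := h.right_admissible hz
  rw [GMN.sigma_psi2 ht.good ha.good]
  exact h.trans _ _ _ (hEquiv_psi2 ha)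

theorem HEquiv.sigma_psi3 {z t : Tuple} (hz : Admissible z) (ht : Admissible t)
    (h : HEquiv z (sigma t)) : HEquiv z (sigma (psi3 t)) := by
  have ha := h.right_admissible hz
  rw [GMN.sigma_psi3 ht.good ha.good]
  exact h.trans _ _ _ (hEquiv_psi3 ha)

theorem hEquiv_sigma_of_not_exceptional {f : Tuple} (hf : Admissible f) (e : f.h1 = f.h0)
    (c0 : f.h0 < f.q0) (c2 : f.q0 < f.h2) (he : ¬ Exceptional f) : HEquiv f (sigma f) :=
  have h := levelMove_sigma hf.good e c0 c2
  h.1.hEquiv_of_not_exceptional hf h.2 he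

theorem reflecting_level {f : Tuple} (hf : Admissible f) :
    Reflecting fun t => Level t → HEquiv f (sigma t) := by
  refine ⟨fun t ht hQ hl => (hQ hl.psi2).sigma_psi2 hf ht, fun t ht hQ hl => ?_⟩
  have h := hl.psi3 ht.good.psi3
  rw [psi3_psi3 ht.good] at h
  exact (hQ h).sigma_psi3 hf ht

/-- The tuple `(h₁,h₀,h₂;q₂,q₁,q₀)`. -/
def swap (f : Tuple) : Tuple := psi1 (psi2 f)

theorem Admissible.swap {f : Tuple} (hf : Admissible f) : Admissible (swap f) := hf.psi2.psi1

theorem hEquiv_swap {f : Tuple} (hf : Admissible f) : HEquiv f (swap f) :=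
  (hEquiv_psi2 hf).trans _ _ _ (hEquiv_psi1 hf.psi2)

theorem hEquiv_sigma_of_nu_eq {f x : Tuple} (hf : Admissible f) (h01 : f.h0 ≤ f.h1)
    (h12 : f.h1 ≤ f.h2) (ha : ¬ Exceptional (swap f)) (hb : ¬ Exceptional f) (hx : HEquiv f x)
    (hn : nu (sigma x) = nu x) : HEquiv f (sigma x) := by
  have hax := hx.right_admissible hf
  have hrot : ¬ SomeRotation (fun t => ¬ (Level t → HEquiv f (sigma t))) f := by
    simp only [SomeRotation, not_or, not_not]
    refine ⟨?_, ?_, ?_⟩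
    · rintro (⟨e, c0, c2⟩ | ⟨e, c2, c0⟩)
      · exact hEquiv_sigma_of_not_exceptional hf e c0 c2 hb
      · omega
    · rintro (⟨e, c0, c2⟩ | ⟨e, c2, c0⟩) <;> simp only [psi1] at e c0 c2 <;> omega
    · rintro (⟨e, c0, c2⟩ | ⟨e, c2, c0⟩)
      · simp only [psi1] at e c0 c2; omega
      · have h : HEquiv f (sigma (swap f)) := (hEquiv_swap hf).trans _ _ _
          (hEquiv_sigma_of_not_exceptional hf.swap e c2 c0 ha)
        exact h.sigma_psi2 hf hf.swap
  rcases sigma_eq_or_level hax.good hn with h | h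
  · rwa [h]
  · rw [(reflecting_level hf).not.someRotation_iff hx] at hrot
    exact not_not.1 (not_or.1 hrot).1 h

/-! ### Ascending paths -/

/-- The tuples reached from `f` by elements of `H` and steps of `σ` that increase `ν`. -/
inductive Ascends (f : Tuple) : Tuple → Prop
  | base {x : Tuple} (h : HEquiv f x) : Ascends f x
  | up {z x : Tuple} (hz : Ascends f z) (az : Admissible z) (as : Admissible (sigma z))
      (hn : nu z < nu (sigma z)) (h : HEquiv (sigma z) x) : Ascends f x

namespace Ascends

variable {f x y : Tuple}

theorem of_hEquiv (h : Ascends f x) (hxy : HEquiv x y) : Ascends f y := by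
  cases h with
  | base h => exact .base (h.trans _ _ _ hxy)
  | up hz az as hn h => exact .up hz az as hn (h.trans _ _ _ hxy)

theorem hEquiv_or_nu_lt (h : Ascends f x) : HEquiv f x ∨ nu f < nu x := by
  induction h with
  | base h => exact .inl h
  | up hz az as hn h ih =>
    right
    rw [← h.nu_eq]
    rcases ih with ih | ih
    · rwa [ih.nu_eq]
    · exact ih.trans hn

theorem reflecting_sigma {z : Tuple} (hz : Admissible z) :
    Reflecting fun t => (t.h1 < t.h0 ∧ t.h1 < t.h2) ∧ HEquiv z (sigma t) :=
  ⟨fun _ ht h => ⟨h.1.symm, h.2.sigma_psi2 hz ht⟩, fun _ ht h => ⟨h.1, h.2.sigma_psi3 hz ht⟩⟩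

theorem sigma (hmin : ∀ g, GEquiv f g → nu f ≤ nu g)
    (hlevel : ∀ x, HEquiv f x → nu (sigma x) = nu x → HEquiv f (sigma x))
    (h : Ascends f x) (hx : Admissible x) (hs : Admissible (GMN.sigma x)) :
    Ascends f (GMN.sigma x) := by
  have up : nu x < nu (GMN.sigma x) → Ascends f (GMN.sigma x) := fun hn =>
    .up h hx hs hn (.refl _)
  have h₀ := h
  cases h with
  | base h =>
    rcases lt_trichotomy (nu (GMN.sigma x)) (nu x) with hn | hn | hn
    · have := hmin _ (h.gEquiv.trans _ _ _ (.rel _ _ ⟨hx, hs, .inr (.inr (.inr rfl))⟩))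
      rw [h.nu_eq] at this
      exact absurd hn this.not_gt
    · exact .base (hlevel x h hn)
    · exact up hn
  | @up z _ hz az as hn h' =>
    have hzz := sigma_sigma az.good as.good
    have hlt := h1_lt_of_nu_sigma_lt as.good (by rwa [hzz])
    have hx' := ((reflecting_sigma az).someRotation_iff h').1
      (.inl ⟨hlt, by rw [hzz]; exact .refl _⟩)
    have hup : x.h0 < x.h1 ∨ x.h2 < x.h1 → Ascends f (GMN.sigma x) := fun hh => by
      rcases sigma_eq_or_nu_lt hx.good hh with e | hn
      · rwa [e]
      · exact up hn
    rcases hx' with hx' | hx' | hx'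
    · exact hz.of_hEquiv hx'.2
    · exact hup (.inr hx'.1.1)
    · exact hup (.inl hx'.1.2)

theorem of_gEquiv (hmin : ∀ g, GEquiv f g → nu f ≤ nu g)
    (hlevel : ∀ x, HEquiv f x → nu (GMN.sigma x) = nu x → HEquiv f (GMN.sigma x))
    {a b : Tuple} (h : GEquiv a b) : Ascends f a ↔ Ascends f b := by
  induction h with
  | rel a b h =>
    have hH : HEquiv a b → (Ascends f a ↔ Ascends f b) := fun h =>
      ⟨fun ha => ha.of_hEquiv h, fun hb => hb.of_hEquiv (h.symm _ _)⟩
    obtain ⟨ha, hb, rfl | rfl | rfl | rfl⟩ := h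
    · exact hH (hEquiv_psi1 ha)
    · exact hH (hEquiv_psi2 ha)
    · exact hH (hEquiv_psi3 ha)
    · have e := sigma_sigma ha.good hb.good
      refine ⟨fun h => h.sigma hmin hlevel ha hb, fun h => ?_⟩
      rw [← e]
      exact h.sigma hmin hlevel hb (by rwa [e])
  | refl _ => rfl
  | symm _ _ _ ih => exact ih.symm
  | trans _ _ _ _ _ ih1 ih2 => exact ih1.trans ih2

end Ascends

theorem Root.not_exceptional {f t : Tuple} (hf : Root f) (ht : HEquiv f t) :
    ¬ Exceptional t := by
  intro he
  have hat := ht.right_admissible hf.1.1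
  have h := levelMove_sigma hat.good he.1.symm he.2.1 he.2.2.1
  have has := h.1.admissible hat h.2
  refine (hf.2 (sigma t) (ht.gEquiv.trans _ _ _ (.rel _ _ ⟨hat, has, by simp⟩)) fun hs => ?_).ne ?_
  · exact h.1.not_hEquiv_of_exceptional hat he ((ht.symm _ _).trans _ _ _ hs)
  · rw [ht.nu_eq, nu, nu, h.1.g_h0, h.1.g_h1, h.1.g_h2, h.1.f_h1]

theorem exceptional_swap_iff (f : Tuple) : Exceptional (swap f) ↔
    f.h0 = f.h1 ∧ f.h0 < f.q2 ∧ f.q2 < f.h2 ∧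
      f.q2 ≠ (-f.q0) % (f.h2 + f.h0) ∧ 2 * f.q2 ≠ f.h0 + f.h2 ∧
      (f.q1 = 0 → f.q2 ≠ ((f.h0 + f.h2) / 2 - f.q0) % (f.h1 + f.h2)) := by
  simp only [Exceptional, swap, psi1, psi2]
  constructor
  · rintro ⟨e, h⟩
    rw [e, add_comm f.h2] at *
    exact ⟨rfl, h⟩
  · rintro ⟨e, h⟩
    rw [e, add_comm f.h2] at *
    exact ⟨rfl, h⟩

/-- a minimal canonical 6-tuple is a root iff neither of the two
exceptional cases a), b) of Theorem 13 holds. -/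
theorem stmt_19 (f : Tuple) (hmin : Minimal f) :
    Root f ↔
      (¬ (f.h0 = f.h1 ∧ f.h0 < f.q2 ∧ f.q2 < f.h2 ∧
            f.q2 ≠ (-f.q0) % (f.h2 + f.h0) ∧ 2 * f.q2 ≠ f.h0 + f.h2 ∧
            (f.q1 = 0 → f.q2 ≠ ((f.h0 + f.h2) / 2 - f.q0) % (f.h1 + f.h2))) ∧
       ¬ (f.h0 = f.h1 ∧ f.h0 < f.q0 ∧ f.q0 < f.h2 ∧
            f.q0 ≠ (-f.q2) % (f.h1 + f.h2) ∧ 2 * f.q0 ≠ f.h0 + f.h2 ∧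
            (f.q1 = 0 → f.q0 ≠ ((f.h0 + f.h2) / 2 - f.q2) % (f.h2 + f.h0)))) := by
  rw [← exceptional_swap_iff]
  change _ ↔ _ ∧ ¬ Exceptional f
  obtain ⟨hcan, hmin⟩ := hmin
  constructor
  · exact fun h => ⟨h.not_exceptional (hEquiv_swap hcan.1), h.not_exceptional (.refl f)⟩
  · rintro ⟨ha, hb⟩
    refine ⟨hcan, fun g hg hne => ?_⟩
    have h := (Ascends.of_gEquiv hmin (fun x => hEquiv_sigma_of_nu_eq hcan.1 hcan.2.1.1
      hcan.2.1.2 ha hb) hg).1 (.base (.refl f))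
    exact h.hEquiv_or_nu_lt.resolve_left hne

end GMN
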